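/- arXiv:1906.03429 — 2 statements merged into one kernel-verified Lean document; each statement's English description precedes it below -/
import Mathlib

section
/- Let n ≥ 1, let θ, τ be permutations of {1,…,n}, and let a, b ∈ ℂ. Suppose that the disjoint cycle expression of θ⁻¹τ consists of exactly r cycles, all of the same length l ≥ 2, and let F = |Fix(θ⁻¹τ)|. Then det(aP_θ + bP_τ) = sgn(θ) · (a^l + (−1)^{l+1} b^l)^r · (a+b)^F, and per(aP_θ + bP_τ) = (a^l + b^l)^r · (a+b)^F. -/
open Finset

/-- The permutation matrix of `θ`: `(P_θ)_{i,j} = 1` if `i = θ(j)`, else `0`. -/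
noncomputable def permMat {n : ℕ} (θ : Equiv.Perm (Fin n)) : Matrix (Fin n) (Fin n) ℂ :=
  Matrix.of fun i j => if i = θ j then 1 else 0

/-- The permanent of an `n × n` complex matrix. -/
noncomputable def perm' {n : ℕ} (A : Matrix (Fin n) (Fin n) ℂ) : ℂ :=
  ∑ σ : Equiv.Perm (Fin n), ∏ i, A i (σ i)

/-
Determinant and permanent are the sums over `S_n` weighted by a character `χ`, namely `χ = sgn` and
`χ = 1`. Factoring out `P_θ` reduces the claim to `a I + b P_π` with `π = θ⁻¹τ`. In the expansion
over permutations `ρ`, only those with `ρ j ∈ {j, π j}` for all `j` contribute. Such a `ρ` agrees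
with `π` on its support, so its cycles are cycles of `π`; hence these `ρ` correspond to the sets of
cycles of `π`. A chosen cycle `c` of length `l` contributes `χ(c) b^l`, an omitted one `a^l`, and a
fixed point of `π` contributes `a + b`, so the sum over all choices factors as a product over the
cycles.
-/

section CycleFactors

open Equiv.Perm

variable {α : Type*} [Fintype α] [DecidableEq α] {ρ π : Equiv.Perm α}

theorem cycleFactorsFinset_subset_iff :
    ρ.cycleFactorsFinset ⊆ π.cycleFactorsFinset ↔ ∀ j, ρ j = j ∨ ρ j = π j := by
  constructor
  · intro hsub j
    by_cases hj : j ∈ ρ.support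
    · have hmem : ρ.cycleOf j ∈ π.cycleFactorsFinset :=
        hsub (cycleOf_mem_cycleFactorsFinset_iff.2 hj)
      have hagree := (mem_cycleFactorsFinset_iff.1 hmem).2 j (mem_support_cycleOf_iff.2
        ⟨SameCycle.refl ρ j, hj⟩)
      exact .inr (by rwa [cycleOf_apply_self] at hagree)
    · exact .inl (notMem_support.1 hj)
  · intro hρ c hc
    have hcycle := mem_cycleFactorsFinset_iff.1 hc
    refine mem_cycleFactorsFinset_iff.2 ⟨hcycle.1, fun j hj => ?_⟩
    have hmoved : ρ j ≠ j := mem_support.1 (mem_cycleFactorsFinset_support_le hc hj)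
    rw [hcycle.2 j hj, (hρ j).resolve_left hmoved]

theorem exists_cycleFactorsFinset_eq_of_subset {S : Finset (Equiv.Perm α)}
    (hS : S ⊆ π.cycleFactorsFinset) : ∃ ρ : Equiv.Perm α, ρ.cycleFactorsFinset = S :=
  ⟨_, cycleFactorsFinset_eq_finset.2 ⟨fun _ hc => (mem_cycleFactorsFinset_iff.1 (hS hc)).1,
    (cycleFactorsFinset_pairwise_disjoint π).mono hS, rfl⟩⟩

theorem map_eq_prod_cycleFactorsFinset {M : Type*} [CommMonoid M] (χ : Equiv.Perm α →* M)
    (π : Equiv.Perm α) : χ π = ∏ c ∈ π.cycleFactorsFinset, χ c := by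
  conv_lhs => rw [← cycleFactorsFinset_noncommProd π]
  rw [map_noncommProd, noncommProd_eq_prod]
  rfl

theorem prod_map_cycleType {M : Type*} [CommMonoid M] (f : ℕ → M) (π : Equiv.Perm α) :
    (π.cycleType.map f).prod = ∏ c ∈ π.cycleFactorsFinset, f #c.support := by
  rw [cycleType_def, Multiset.map_map]
  rfl

theorem sum_card_support_cycleFactorsFinset (π : Equiv.Perm α) :
    ∑ c ∈ π.cycleFactorsFinset, #c.support = #π.support :=
  π.sum_cycleType

theorem support_subset_of_cycleFactorsFinset_subset
    (h : ρ.cycleFactorsFinset ⊆ π.cycleFactorsFinset) : ρ.support ⊆ π.support := by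
  intro j hj
  rw [mem_support] at hj ⊢
  rwa [← (cycleFactorsFinset_subset_iff.1 h j).resolve_left hj]

theorem sum_card_support_sdiff_cycleFactorsFinset
    (h : ρ.cycleFactorsFinset ⊆ π.cycleFactorsFinset) :
    ∑ c ∈ π.cycleFactorsFinset \ ρ.cycleFactorsFinset, #c.support = #(π.support \ ρ.support) := by
  have hsum := sum_sdiff (f := fun c => #c.support) h
  have hcard := card_sdiff_add_card_eq_card (support_subset_of_cycleFactorsFinset_subset h)
  rw [sum_card_support_cycleFactorsFinset, sum_card_support_cycleFactorsFinset] at hsum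
  lia

theorem cycleType_noncommProd_eq_replicate {ι : Type*} [Fintype ι] {C : ι → Equiv.Perm α}
    {l : ℕ} (hcyc : ∀ i, (C i).IsCycle) (hl : ∀ i, #(C i).support = l)
    (hdisj : ∀ i j, i ≠ j → (C i).Disjoint (C j)) :
    (univ.noncommProd C fun i _ j _ hij => (hdisj i j hij).commute).cycleType =
      Multiset.replicate (Fintype.card ι) l := by
  rw [Disjoint.cycleType_noncommProd fun i _ j _ hij => hdisj i j hij]
  simp only [(hcyc _).cycleType, hl, sum_const, card_univ, Multiset.nsmul_singleton]

end CycleFactors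

section GeneralizedMatrixFunction

variable {α R : Type*} [DecidableEq α]

theorem smul_one_add_smul_permMatrix_apply [CommSemiring R] (π : Equiv.Perm α) (a b : R)
    (i j : α) :
    (a • (1 : Matrix α α R) + b • π.permMatrix R) i j =
      (if j = i then a else 0) + if j = π i then b else 0 := by
  simp [Matrix.one_apply, Equiv.toPEquiv_apply, eq_comm]

variable [Fintype α]

/-- The generalized matrix function `A ↦ ∑ σ, χ σ * ∏ i, A i (σ i)` attached to a function `χ` on
the full symmetric group; it interpolates between the determinant (`χ = sgn`) and the permanent
(`χ = 1`). -/
def genMatrixFn [CommSemiring R] (χ : Equiv.Perm α → R) (A : Matrix α α R) : R :=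
  ∑ σ : Equiv.Perm α, χ σ * ∏ i, A i (σ i)

theorem det_eq_genMatrixFn [CommRing R] (A : Matrix α α R) :
    A.det = genMatrixFn (fun σ => ((Equiv.Perm.sign σ : ℤ) : R)) A := by
  rw [← Matrix.det_transpose, Matrix.det_apply']
  rfl

variable [CommSemiring R]

theorem permanent_eq_genMatrixFn (A : Matrix α α R) : A.permanent = genMatrixFn 1 A := by
  rw [← Matrix.permanent_transpose]
  simp only [Matrix.permanent, genMatrixFn, Pi.one_apply, one_mul, Matrix.transpose_apply]

theorem genMatrixFn_mul_permMatrix (χ : Equiv.Perm α →* R) (A : Matrix α α R)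
    (θ : Equiv.Perm α) : genMatrixFn χ (A * θ.permMatrix R) = χ θ * genMatrixFn χ A := by
  simp only [genMatrixFn, mul_sum]
  refine (Fintype.sum_equiv (Equiv.mulLeft θ) _ _ fun ρ => ?_).symm
  simp [Matrix.submatrix_apply, PEquiv.mul_toMatrix_toPEquiv, mul_assoc]

theorem prod_smul_one_add_smul_permMatrix_eq_zero {ρ π : Equiv.Perm α}
    (h : ¬ ρ.cycleFactorsFinset ⊆ π.cycleFactorsFinset) (a b : R) :
    ∏ j, (a • (1 : Matrix α α R) + b • π.permMatrix R) j (ρ j) = 0 := by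
  rw [cycleFactorsFinset_subset_iff] at h
  push Not at h
  obtain ⟨j, hj, hπj⟩ := h
  refine prod_eq_zero (mem_univ j) ?_
  rw [smul_one_add_smul_permMatrix_apply, if_neg hj, if_neg hπj, add_zero]

theorem prod_smul_one_add_smul_permMatrix {ρ π : Equiv.Perm α}
    (h : ρ.cycleFactorsFinset ⊆ π.cycleFactorsFinset) (a b : R) :
    ∏ j, (a • (1 : Matrix α α R) + b • π.permMatrix R) j (ρ j) =
      (∏ c ∈ ρ.cycleFactorsFinset, b ^ #c.support) *
        (∏ c ∈ π.cycleFactorsFinset \ ρ.cycleFactorsFinset, a ^ #c.support) *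
          (a + b) ^ #{j | π j = j} := by
  have hsub := support_subset_of_cycleFactorsFinset_subset h
  have hmoved : ∏ j ∈ ρ.support, (a • (1 : Matrix α α R) + b • π.permMatrix R) j (ρ j) =
      b ^ #ρ.support := by
    refine prod_eq_pow_card fun j hj => ?_
    rw [Equiv.Perm.mem_support] at hj
    rw [smul_one_add_smul_permMatrix_apply, if_neg hj,
      if_pos ((cycleFactorsFinset_subset_iff.1 h j).resolve_left hj), zero_add]
  have hkept : ∏ j ∈ π.support \ ρ.support,
      (a • (1 : Matrix α α R) + b • π.permMatrix R) j (ρ j) = a ^ #(π.support \ ρ.support) := by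
    refine prod_eq_pow_card fun j hj => ?_
    rw [mem_sdiff, Equiv.Perm.mem_support, Equiv.Perm.notMem_support] at hj
    rw [smul_one_add_smul_permMatrix_apply, hj.2, if_pos rfl, if_neg hj.1.symm, add_zero]
  have hfixed : ∏ j ∈ π.supportᶜ, (a • (1 : Matrix α α R) + b • π.permMatrix R) j (ρ j) =
      (a + b) ^ #π.supportᶜ := by
    refine prod_eq_pow_card fun j hj => ?_
    have hπj := Equiv.Perm.notMem_support.1 (mem_compl.1 hj)
    have hρj := Equiv.Perm.notMem_support.1 (notMem_mono hsub (mem_compl.1 hj))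
    rw [smul_one_add_smul_permMatrix_apply, hρj, hπj, if_pos rfl, if_pos rfl]
  have hcompl : π.supportᶜ = ({j | π j = j} : Finset α) := by
    ext j
    rw [mem_compl, Equiv.Perm.notMem_support, mem_filter_univ]
  rw [← prod_mul_prod_compl π.support, ← prod_sdiff hsub, hmoved, hkept, hfixed, hcompl,
    prod_pow_eq_pow_sum, prod_pow_eq_pow_sum, sum_card_support_cycleFactorsFinset,
    sum_card_support_sdiff_cycleFactorsFinset h, mul_comm (a ^ _)]

theorem genMatrixFn_smul_one_add_smul_permMatrix (χ : Equiv.Perm α →* R) (π : Equiv.Perm α)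
    (a b : R) :
    genMatrixFn χ (a • (1 : Matrix α α R) + b • π.permMatrix R) =
      (∏ c ∈ π.cycleFactorsFinset, (a ^ #c.support + χ c * b ^ #c.support)) *
        (a + b) ^ #{j | π j = j} := by
  calc
    genMatrixFn χ (a • (1 : Matrix α α R) + b • π.permMatrix R)
    _ = ∑ ρ with ρ.cycleFactorsFinset ⊆ π.cycleFactorsFinset,
          χ ρ * ∏ j, (a • (1 : Matrix α α R) + b • π.permMatrix R) j (ρ j) := by
      refine (sum_filter_of_ne fun ρ _ hne => ?_).symm
      by_contra hρ
      exact hne (by rw [prod_smul_one_add_smul_permMatrix_eq_zero hρ, mul_zero])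
    _ = ∑ S ∈ π.cycleFactorsFinset.powerset, (∏ c ∈ S, χ c * b ^ #c.support) *
          (∏ c ∈ π.cycleFactorsFinset \ S, a ^ #c.support) * (a + b) ^ #{j | π j = j} := by
      refine sum_nbij Equiv.Perm.cycleFactorsFinset
        (fun ρ hρ => mem_powerset.2 ((mem_filter_univ ρ).1 hρ))
        Equiv.Perm.cycleFactorsFinset_injective.injOn (fun S hS => ?_) fun ρ hρ => ?_
      · obtain ⟨ρ, rfl⟩ := exists_cycleFactorsFinset_eq_of_subset (mem_powerset.1 hS)
        exact ⟨ρ, (mem_filter_univ ρ).2 (mem_powerset.1 hS), rfl⟩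
      · rw [prod_smul_one_add_smul_permMatrix ((mem_filter_univ ρ).1 hρ),
          map_eq_prod_cycleFactorsFinset, prod_mul_distrib, mul_assoc, mul_assoc, mul_assoc]
    _ = (∏ c ∈ π.cycleFactorsFinset, (a ^ #c.support + χ c * b ^ #c.support)) *
          (a + b) ^ #{j | π j = j} := by
      simp only [← sum_mul, ← prod_add, add_comm (a ^ _)]

theorem genMatrixFn_smul_permMatrix_add_smul_permMatrix (χ : Equiv.Perm α →* R)
    (θ τ : Equiv.Perm α) (a b : R) :
    genMatrixFn χ (a • θ.permMatrix R + b • τ.permMatrix R) =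
      χ θ * (∏ c ∈ (θ⁻¹ * τ).cycleFactorsFinset, (a ^ #c.support + χ c * b ^ #c.support)) *
        (a + b) ^ #{j | (θ⁻¹ * τ) j = j} := by
  have hfactor : a • θ.permMatrix R + b • τ.permMatrix R =
      (a • (1 : Matrix α α R) + b • (θ⁻¹ * τ).permMatrix R) * θ.permMatrix R := by
    rw [add_mul, smul_mul_assoc, smul_mul_assoc, one_mul, ← Matrix.permMatrix_mul,
      mul_inv_cancel_left]
  rw [hfactor, genMatrixFn_mul_permMatrix, genMatrixFn_smul_one_add_smul_permMatrix, mul_assoc]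

end GeneralizedMatrixFunction

theorem genMatrixFn_stmt8_general {α R : Type*} [Fintype α] [DecidableEq α] [CommRing R]
    (θ τ : Equiv.Perm α) (a b : R) :
    (a • θ.permMatrix R + b • τ.permMatrix R).det =
        ((Equiv.Perm.sign θ : ℤ) : R) *
          ((θ⁻¹ * τ).cycleType.map fun l => a ^ l + (-1) ^ (l + 1) * b ^ l).prod *
            (a + b) ^ #{i | (θ⁻¹ * τ) i = i} ∧
      (a • θ.permMatrix R + b • τ.permMatrix R).permanent =
        ((θ⁻¹ * τ).cycleType.map fun l => a ^ l + b ^ l).prod *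
          (a + b) ^ #{i | (θ⁻¹ * τ) i = i} := by
  rw [prod_map_cycleType, prod_map_cycleType]
  constructor
  · let χ : Equiv.Perm α →* R :=
      ((Int.castRingHom R : ℤ →* R).comp (Units.coeHom ℤ)).comp Equiv.Perm.sign
    have hχ : ∀ c ∈ (θ⁻¹ * τ).cycleFactorsFinset, χ c = (-1) ^ (#c.support + 1) := by
      intro c hc
      simp [χ, (Equiv.Perm.mem_cycleFactorsFinset_iff.1 hc).1.sign, pow_succ]
    rw [det_eq_genMatrixFn]
    refine (genMatrixFn_smul_permMatrix_add_smul_permMatrix χ θ τ a b).trans ?_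
    rw [prod_congr rfl fun c hc => by rw [hχ c hc]]
    rfl
  · rw [permanent_eq_genMatrixFn]
    simpa using! genMatrixFn_smul_permMatrix_add_smul_permMatrix (1 : Equiv.Perm α →* R) θ τ a b

theorem smul_permMat_add_smul_permMat {n : ℕ} (θ τ : Equiv.Perm (Fin n)) (a b : ℂ) :
    a • permMat θ + b • permMat τ = (a • θ.permMatrix ℂ + b • τ.permMatrix ℂ).transpose := by
  ext i j
  simp [permMat, Equiv.toPEquiv_apply, eq_comm]

theorem perm'_transpose {n : ℕ} (A : Matrix (Fin n) (Fin n) ℂ) :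
    perm' A.transpose = A.permanent :=
  rfl

/-- If the disjoint cycle expression of `θ⁻¹τ` consists of exactly `r`
cycles, all of the same length `l ≥ 2`, and `F = |Fix(θ⁻¹τ)|`, then
`det(aP_θ + bP_τ) = sgn(θ)·(a^l + (−1)^{l+1} b^l)^r·(a+b)^F` and
`per(aP_θ + bP_τ) = (a^l + b^l)^r·(a+b)^F`. -/
theorem genMatrixFn_stmt8 (n r l : ℕ) (hn : 1 ≤ n) (θ τ : Equiv.Perm (Fin n)) (a b : ℂ)
    (C : Fin r → Equiv.Perm (Fin n))
    (hcyc : ∀ i, (C i).IsCycle)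
    (hl : ∀ i, (C i).support.card = l)
    (hl2 : 2 ≤ l)
    (hdisj : ∀ i j, i ≠ j → (C i).Disjoint (C j))
    (hprod : (Finset.univ.noncommProd C
      (fun i _ j _ hij => (hdisj i j hij).commute)) = θ⁻¹ * τ)
    (F : ℕ) (hF : F = (Finset.univ.filter fun i => (θ⁻¹ * τ) i = i).card) :
    (a • permMat θ + b • permMat τ).det =
        ((Equiv.Perm.sign θ : ℤ) : ℂ) * (a ^ l + (-1 : ℂ) ^ (l + 1) * b ^ l) ^ r *
          (a + b) ^ F ∧
      perm' (a • permMat θ + b • permMat τ) = (a ^ l + b ^ l) ^ r * (a + b) ^ F := by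
  subst hF
  rw [smul_permMat_add_smul_permMat, Matrix.det_transpose, perm'_transpose]
  simpa [← hprod, cycleType_noncommProd_eq_replicate hcyc hl hdisj] using
    genMatrixFn_stmt8_general θ τ a b
end

section
/- Let n ≥ 1, let a, b ∈ ℂ, and let θ, τ be permutations of {1,…,n}. Then aP_θ + bP_τ is positive semidefinite if and only if there exist real numbers k, m with k ≥ |m| and a permutation π of {1,…,n} with π = π⁻¹ such that aP_θ + bP_τ = kI + mP_π. -/
open ComplexOrder

/-!
A zero diagonal entry of a positive semidefinite matrix forces its whole row to vanish, so in
`A = aP_θ + bP_τ` every index is fixed by `θ` or by `τ`, unless its row is zero. Hence, when `a` and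
`a + b` are nonzero, `θ` and `τ` are disjoint; if moreover neither is the identity, comparing
off-diagonal entries with diagonal ones gives `a = b`. For disjoint permutations
`P_σ + P_ρ = I + P_{σρ}`, which rewrites `A` as `cI + dP_π`. When `a + b = 0 ≠ a`, the sign of the
diagonal shows that one of the pairs `(θ, θ⁻¹τ)`, `(τ, τ⁻¹θ)` is disjoint, and the same identity
applies. If `cI + dP_π` is not scalar, hermitian symmetry makes `π` an involution and `d` real, and
a `2 × 2` principal minor gives `|d| ≤ c`. Conversely, for an involution `π` and `|m| ≤ k`, the
matrix `kI + mP_π` is the square of some real combination `αI + βP_π`, hence the Gram matrix of the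
vectors `αe_i + βe_{π i}`.
-/

lemma exists_sq_add_sq_eq_and_two_mul_mul_eq {k m : ℝ} (hmk : |m| ≤ k) :
    ∃ α β : ℝ, α ^ 2 + β ^ 2 = k ∧ 2 * α * β = m := by
  obtain ⟨hneg, hle⟩ := abs_le.1 hmk
  have hadd : √(k + m) ^ 2 = k + m := Real.sq_sqrt (by linarith)
  have hsub : √(k - m) ^ 2 = k - m := Real.sq_sqrt (by linarith)
  refine ⟨(√(k + m) + √(k - m)) / 2, (√(k + m) - √(k - m)) / 2, ?_, ?_⟩
  · linear_combination (hadd + hsub) / 2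
  · linear_combination (hadd - hsub) / 2

section PosSemidef

variable {ι 𝕜 : Type*} [RCLike 𝕜] {A : Matrix ι ι 𝕜}

lemma sq_norm_apply_le_of_posSemidef (hA : A.PosSemidef) (i j : ι) :
    ((‖A i j‖ ^ 2 : ℝ) : 𝕜) ≤ A i i * A j j := by
  have hdet := (hA.submatrix ![i, j]).det_nonneg
  simp only [Matrix.det_fin_two, Matrix.submatrix_apply, Matrix.cons_val_zero,
    Matrix.cons_val_one] at hdet
  rw [← hA.isHermitian.apply j i, RCLike.star_def, RCLike.mul_conj] at hdet
  simpa using hdet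

lemma apply_eq_zero_of_posSemidef_of_diag_eq_zero (hA : A.PosSemidef) {i : ι} (hi : A i i = 0)
    (j : ι) : A i j = 0 := by
  have hle := sq_norm_apply_le_of_posSemidef hA i j
  rw [hi, zero_mul, ← RCLike.ofReal_zero, RCLike.ofReal_le_ofReal] at hle
  exact norm_eq_zero.1 (sq_eq_zero_iff.1 (hle.antisymm (sq_nonneg _)))

lemma norm_apply_le_of_posSemidef_of_diag_eq {c : 𝕜} (hA : A.PosSemidef) {i j : ι}
    (hi : A i i = c) (hj : A j j = c) : (‖A i j‖ : 𝕜) ≤ c := by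
  obtain ⟨r, hr, rfl⟩ := RCLike.nonneg_iff_exists_ofReal.1 (hi ▸ hA.diag_nonneg)
  have hle := sq_norm_apply_le_of_posSemidef hA i j
  rw [hi, hj, ← RCLike.ofReal_mul, RCLike.ofReal_le_ofReal, ← sq] at hle
  exact RCLike.ofReal_le_ofReal.2 (le_of_sq_le_sq hle hr)

-- `Matrix.posSemidef_gram` requires a finite index type.
lemma gram_posSemidef {E : Type*} [SeminormedAddCommGroup E] [InnerProductSpace 𝕜 E]
    (v : ι → E) : (Matrix.gram 𝕜 v).PosSemidef := by
  refine ⟨Matrix.isHermitian_gram 𝕜 v, fun x => ?_⟩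
  have hform : (x.sum fun i xi => x.sum fun j xj => star xi * Matrix.gram 𝕜 v i j * xj) =
      inner 𝕜 (x.sum fun i xi => xi • v i) (x.sum fun i xi => xi • v i) := by
    simp_rw [Finsupp.sum, sum_inner, inner_sum, inner_smul_left, inner_smul_right,
      Matrix.gram_apply, RCLike.star_def]
    exact Finset.sum_congr rfl fun i _ => Finset.sum_congr rfl fun j _ => by ring
  rw [hform, inner_self_eq_norm_sq_to_K, ← RCLike.ofReal_pow]
  exact RCLike.ofReal_nonneg.2 (sq_nonneg _)

end PosSemidef

section PermMatrix

variable {ι R : Type*} [DecidableEq ι]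

lemma permMatrix_apply [Zero R] [One R] (σ : Equiv.Perm ι) (i j : ι) :
    σ.permMatrix R i j = if σ i = j then 1 else 0 := by
  simp [PEquiv.toMatrix_apply, Equiv.toPEquiv_apply, eq_comm]

lemma smul_permMatrix_add_smul_permMatrix_apply [NonAssocSemiring R] (a b : R) (θ τ : Equiv.Perm ι)
    (i j : ι) : (a • θ.permMatrix R + b • τ.permMatrix R) i j =
      (if θ i = j then a else 0) + if τ i = j then b else 0 := by
  simp only [Matrix.add_apply, Matrix.smul_apply, permMatrix_apply, smul_eq_mul, mul_ite, mul_one,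
    mul_zero]

lemma smul_one_add_smul_permMatrix_apply_s11 [NonAssocSemiring R] (c d : R) (σ : Equiv.Perm ι)
    (i j : ι) : (c • 1 + d • σ.permMatrix R) i j =
      (if i = j then c else 0) + if σ i = j then d else 0 := by
  rw [← Matrix.permMatrix_one, smul_permMatrix_add_smul_permMatrix_apply]
  rfl

lemma permMatrix_add_permMatrix_of_disjoint [AddCommMonoidWithOne R] {σ ρ : Equiv.Perm ι}
    (h : σ.Disjoint ρ) :
    σ.permMatrix R + ρ.permMatrix R = 1 + (σ * ρ).permMatrix R := by
  ext i j
  simp only [Matrix.add_apply, permMatrix_apply, Matrix.one_apply]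
  rcases h i with hσ | hρ
  · rw [h.commute.eq, Equiv.Perm.mul_apply, hσ]
  · rw [Equiv.Perm.mul_apply, hρ, add_comm]

lemma permMatrix_sub_permMatrix_of_disjoint [AddCommGroupWithOne R] {θ τ : Equiv.Perm ι}
    (h : θ.Disjoint (θ⁻¹ * τ)) :
    θ.permMatrix R - τ.permMatrix R = 1 - (θ⁻¹ * τ).permMatrix R := by
  rw [sub_eq_sub_iff_add_eq_add, permMatrix_add_permMatrix_of_disjoint h, mul_inv_cancel_left]

lemma star_eq_of_isHermitian_smul_one_add_smul_permMatrix [NonAssocSemiring R] [StarRing R]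
    {c d : R} {σ : Equiv.Perm ι} (h : (c • 1 + d • σ.permMatrix R).IsHermitian) {i : ι}
    (hi : σ i ≠ i) :
    star d = if σ (σ i) = i then d else 0 := by
  simpa [smul_one_add_smul_permMatrix_apply_s11, hi, hi.symm] using h.apply (σ i) i

lemma eq_inv_of_isHermitian_smul_one_add_smul_permMatrix [NonAssocSemiring R] [StarRing R]
    {c d : R} {σ : Equiv.Perm ι} (h : (c • 1 + d • σ.permMatrix R).IsHermitian) (hd : d ≠ 0) :
    σ = σ⁻¹ := by
  refine eq_inv_iff_mul_eq_one.2 (Equiv.ext fun i => ?_)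
  rw [Equiv.Perm.mul_apply, Equiv.Perm.one_apply]
  by_contra hne
  have hi : σ i ≠ i := fun hi => hne (by rw [hi, hi])
  have hstar := star_eq_of_isHermitian_smul_one_add_smul_permMatrix h hi
  rw [if_neg hne, star_eq_zero] at hstar
  exact hd hstar

end PermMatrix

section PosSemidefPermMatrix

variable {ι 𝕜 : Type*} [DecidableEq ι] [RCLike 𝕜] {a b c d : 𝕜} {θ τ σ : Equiv.Perm ι}

lemma gram_smul_add_smul_of_orthonormal {E : Type*} [SeminormedAddCommGroup E]
    [InnerProductSpace 𝕜 E] {e : ι → E} (he : Orthonormal 𝕜 e) {π : Equiv.Perm ι} (hπ : π = π⁻¹)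
    (α β : ℝ) :
    Matrix.gram 𝕜 (fun i => (α : 𝕜) • e i + (β : 𝕜) • e (π i)) =
      ((α ^ 2 + β ^ 2 : ℝ) : 𝕜) • 1 + ((2 * α * β : ℝ) : 𝕜) • π.permMatrix 𝕜 := by
  ext i j
  have hsymm : i = π j ↔ π i = j := by
    conv_lhs => rw [hπ, Equiv.Perm.eq_inv_iff_eq]
  simp only [Matrix.gram_apply, inner_add_left, inner_add_right, inner_smul_left, inner_smul_right,
    RCLike.conj_ofReal, orthonormal_iff_ite.1 he, hsymm, π.injective.eq_iff,
    smul_one_add_smul_permMatrix_apply_s11]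
  split_ifs <;> push_cast <;> ring

lemma posSemidef_smul_one_add_smul_permMatrix {k m : ℝ} (hmk : |m| ≤ k) {π : Equiv.Perm ι}
    (hπ : π = π⁻¹) : ((k : 𝕜) • 1 + (m : 𝕜) • π.permMatrix 𝕜).PosSemidef := by
  obtain ⟨α, β, rfl, rfl⟩ := exists_sq_add_sq_eq_and_two_mul_mul_eq hmk
  have he : Orthonormal 𝕜 fun i : ι => (lp.single 2 i 1 : lp (fun _ : ι => 𝕜) 2) := by
    refine orthonormal_iff_ite.2 fun i j => ?_
    simp [lp.inner_single_left, Pi.single_apply]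
  rw [← gram_smul_add_smul_of_orthonormal he hπ]
  exact gram_posSemidef _

lemma norm_coeff_le_of_posSemidef_of_fixed
    (h : (a • θ.permMatrix 𝕜 + b • τ.permMatrix 𝕜).PosSemidef)
    {i : ι} (hθ : θ i ≠ i) (hτ : τ i = i) (hτθ : τ (θ i) = θ i) : (‖a‖ : 𝕜) ≤ b := by
  have hdiag (j : ι) (hθj : θ j ≠ j) (hτj : τ j = j) :
      (a • θ.permMatrix 𝕜 + b • τ.permMatrix 𝕜) j j = b := by
    rw [smul_permMatrix_add_smul_permMatrix_apply, if_neg hθj, if_pos hτj, zero_add]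
  have hoff : (a • θ.permMatrix 𝕜 + b • τ.permMatrix 𝕜) i (θ i) = a := by
    rw [smul_permMatrix_add_smul_permMatrix_apply, if_pos rfl, hτ, if_neg hθ.symm, add_zero]
  simpa only [hoff] using norm_apply_le_of_posSemidef_of_diag_eq h (hdiag i hθ hτ)
    (hdiag (θ i) (θ.injective.ne hθ) hτθ)

lemma apply_eq_self_or_apply_eq_self_of_posSemidef
    (h : (a • θ.permMatrix 𝕜 + b • τ.permMatrix 𝕜).PosSemidef)
    {i : ι} (hrow : a + (if τ i = θ i then b else 0) ≠ 0) : θ i = i ∨ τ i = i := by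
  by_contra! hne
  have hdiag : (a • θ.permMatrix 𝕜 + b • τ.permMatrix 𝕜) i i = 0 := by
    rw [smul_permMatrix_add_smul_permMatrix_apply, if_neg hne.1, if_neg hne.2, add_zero]
  have hzero := apply_eq_zero_of_posSemidef_of_diag_eq_zero h hdiag (θ i)
  rw [smul_permMatrix_add_smul_permMatrix_apply, if_pos rfl] at hzero
  exact hrow hzero

lemma disjoint_of_posSemidef_of_add_ne_zero
    (h : (a • θ.permMatrix 𝕜 + b • τ.permMatrix 𝕜).PosSemidef) (ha : a ≠ 0) (hab : a + b ≠ 0) :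
    θ.Disjoint τ := by
  refine fun i => apply_eq_self_or_apply_eq_self_of_posSemidef h ?_
  split_ifs
  · exact hab
  · rwa [add_zero]

lemma coeff_eq_of_posSemidef_of_disjoint (h : (a • θ.permMatrix 𝕜 + b • τ.permMatrix 𝕜).PosSemidef)
    (hdisj : θ.Disjoint τ) (hθ : θ ≠ 1) (hτ : τ ≠ 1) : a = b := by
  have norm_le {a b : 𝕜} {θ τ : Equiv.Perm ι} (hdisj : θ.Disjoint τ) (hθ : θ ≠ 1)
      (h : (a • θ.permMatrix 𝕜 + b • τ.permMatrix 𝕜).PosSemidef) : (‖a‖ : 𝕜) ≤ b := by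
    obtain ⟨i, hi⟩ := not_forall.1 (mt Equiv.ext hθ)
    exact norm_coeff_le_of_posSemidef_of_fixed h hi ((hdisj i).resolve_left hi)
      ((hdisj (θ i)).resolve_left (θ.injective.ne hi))
  have hab := norm_le hdisj hθ h
  have hba := norm_le hdisj.symm hτ (by rwa [add_comm] at h)
  have norm_eq {a b : 𝕜} (hab : (‖a‖ : 𝕜) ≤ b) : (‖b‖ : 𝕜) = b :=
    RCLike.norm_of_nonneg' ((RCLike.ofReal_nonneg.2 (norm_nonneg a)).trans hab)
  exact ((norm_eq hba).ge.trans hab).antisymm ((norm_eq hab).ge.trans hba)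

lemma disjoint_inv_mul_or_disjoint_inv_mul_of_posSemidef
    (h : (a • θ.permMatrix 𝕜 + (-a) • τ.permMatrix 𝕜).PosSemidef) (ha : a ≠ 0) :
    θ.Disjoint (θ⁻¹ * τ) ∨ τ.Disjoint (τ⁻¹ * θ) := by
  have hfixed {i : ι} (hi : τ i ≠ θ i) : θ i = i ∨ τ i = i :=
    apply_eq_self_or_apply_eq_self_of_posSemidef h (by rwa [if_neg hi, add_zero])
  simp only [Equiv.Perm.Disjoint, Equiv.Perm.mul_apply, Equiv.Perm.inv_eq_iff_eq]
  by_contra! ⟨⟨i, hθi, hi⟩, ⟨j, hτj, hj⟩⟩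
  have hτi : τ i = i := (hfixed hi).resolve_left hθi
  have hθj : θ j = j := (hfixed hj.symm).resolve_right hτj
  have hi_nonneg : 0 ≤ -a := by
    simpa [smul_permMatrix_add_smul_permMatrix_apply, hθi, hτi] using h.diag_nonneg (i := i)
  have hj_nonneg : 0 ≤ a := by
    simpa [smul_permMatrix_add_smul_permMatrix_apply, hθj, hτj] using h.diag_nonneg (i := j)
  exact ha ((neg_nonneg.1 hi_nonneg).antisymm hj_nonneg)

lemma exists_eq_smul_one_add_smul_permMatrix
    (h : (a • θ.permMatrix 𝕜 + b • τ.permMatrix 𝕜).PosSemidef) :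
    ∃ (c d : 𝕜) (π : Equiv.Perm ι),
      a • θ.permMatrix 𝕜 + b • τ.permMatrix 𝕜 = c • 1 + d • π.permMatrix 𝕜 := by
  rcases eq_or_ne a 0 with rfl | ha
  · exact ⟨0, b, τ, by simp only [zero_smul]⟩
  rcases eq_or_ne (a + b) 0 with hab | hab
  · obtain rfl : b = -a := eq_neg_of_add_eq_zero_right hab
    rcases disjoint_inv_mul_or_disjoint_inv_mul_of_posSemidef h ha with hdisj | hdisj
    · refine ⟨a, -a, θ⁻¹ * τ, ?_⟩
      rw [neg_smul, neg_smul, ← sub_eq_add_neg, ← sub_eq_add_neg, ← smul_sub, ← smul_sub,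
        permMatrix_sub_permMatrix_of_disjoint hdisj]
    · refine ⟨-a, a, τ⁻¹ * θ, ?_⟩
      simp only [neg_smul, neg_add_eq_sub, ← sub_eq_add_neg, ← smul_sub]
      rw [← neg_sub, permMatrix_sub_permMatrix_of_disjoint hdisj, neg_sub]
  have hdisj := disjoint_of_posSemidef_of_add_ne_zero h ha hab
  rcases eq_or_ne θ 1 with rfl | hθ
  · exact ⟨a, b, τ, by rw [Matrix.permMatrix_one]⟩
  rcases eq_or_ne τ 1 with rfl | hτ
  · exact ⟨b, a, θ, by rw [Matrix.permMatrix_one, add_comm]⟩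
  obtain rfl := coeff_eq_of_posSemidef_of_disjoint h hdisj hθ hτ
  exact ⟨a, a, θ * τ, by
    simp only [← smul_add, permMatrix_add_permMatrix_of_disjoint hdisj]⟩

lemma exists_ofReal_of_posSemidef_smul_one (h : (c • (1 : Matrix ι ι 𝕜)).PosSemidef) :
    ∃ k : ℝ, 0 ≤ k ∧ c • (1 : Matrix ι ι 𝕜) = (k : 𝕜) • 1 := by
  rcases isEmpty_or_nonempty ι with _ | ⟨⟨i⟩⟩
  · exact ⟨0, le_rfl, Subsingleton.elim _ _⟩
  obtain ⟨k, hk, hkc⟩ := RCLike.nonneg_iff_exists_ofReal.1 (h.diag_nonneg (i := i))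
  rw [Matrix.smul_apply, Matrix.one_apply_eq, smul_eq_mul, mul_one] at hkc
  exact ⟨k, hk, by rw [hkc]⟩

lemma exists_ofReal_of_posSemidef_smul_one_add_smul_permMatrix
    (h : (c • 1 + d • σ.permMatrix 𝕜).PosSemidef) :
    ∃ (k m : ℝ) (π : Equiv.Perm ι), |m| ≤ k ∧ π = π⁻¹ ∧
      c • 1 + d • σ.permMatrix 𝕜 = (k : 𝕜) • 1 + (m : 𝕜) • π.permMatrix 𝕜 := by
  by_cases hscalar : ∃ e : 𝕜, c • 1 + d • σ.permMatrix 𝕜 = e • 1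
  · obtain ⟨e, he⟩ := hscalar
    obtain ⟨k, hk, hek⟩ := exists_ofReal_of_posSemidef_smul_one (he ▸ h)
    exact ⟨k, 0, 1, by rwa [abs_zero], inv_one.symm, by simp [he, hek]⟩
  have hd : d ≠ 0 := by
    rintro rfl
    exact hscalar ⟨c, by simp⟩
  have hσ : σ ≠ 1 := by
    rintro rfl
    exact hscalar ⟨c + d, by rw [Matrix.permMatrix_one, add_smul]⟩
  obtain ⟨i, hi⟩ := not_forall.1 (mt Equiv.ext hσ)
  have hinv := eq_inv_of_isHermitian_smul_one_add_smul_permMatrix h.isHermitian hd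
  have hd_real : star d = d := by
    rw [star_eq_of_isHermitian_smul_one_add_smul_permMatrix h.isHermitian hi,
      if_pos (Equiv.Perm.eq_inv_iff_eq.1 (DFunLike.congr_fun hinv i))]
  obtain ⟨m, rfl⟩ := RCLike.conj_eq_iff_real.1 hd_real
  have hnorm : (‖(m : 𝕜)‖ : 𝕜) ≤ c := by
    rw [← Matrix.permMatrix_one, add_comm] at h
    exact norm_coeff_le_of_posSemidef_of_fixed h hi rfl rfl
  obtain ⟨k, -, rfl⟩ := RCLike.nonneg_iff_exists_ofReal.1
    ((RCLike.ofReal_nonneg.2 (norm_nonneg _)).trans hnorm)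
  rw [RCLike.norm_ofReal, RCLike.ofReal_le_ofReal] at hnorm
  exact ⟨k, m, σ, hnorm, hinv, rfl⟩

end PosSemidefPermMatrix

theorem genMatrixFn_stmt11_general {ι 𝕜 : Type*} [DecidableEq ι] [RCLike 𝕜] (a b : 𝕜)
    (θ τ : Equiv.Perm ι) :
    (a • θ.permMatrix 𝕜 + b • τ.permMatrix 𝕜).PosSemidef ↔
      ∃ (k m : ℝ) (π : Equiv.Perm ι), |m| ≤ k ∧ π = π⁻¹ ∧
        a • θ.permMatrix 𝕜 + b • τ.permMatrix 𝕜 = (k : 𝕜) • 1 + (m : 𝕜) • π.permMatrix 𝕜 := by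
  constructor
  · intro h
    obtain ⟨c, d, σ, heq⟩ := exists_eq_smul_one_add_smul_permMatrix h
    rw [heq] at h ⊢
    exact exists_ofReal_of_posSemidef_smul_one_add_smul_permMatrix h
  · rintro ⟨k, m, π, hmk, hπ, heq⟩
    rw [heq]
    exact posSemidef_smul_one_add_smul_permMatrix hmk hπ

lemma permMat_eq_permMatrix_inv {n : ℕ} (θ : Equiv.Perm (Fin n)) :
    permMat θ = (θ⁻¹).permMatrix ℂ := by
  ext i j
  simp only [permMat, Matrix.of_apply, permMatrix_apply, Equiv.Perm.inv_eq_iff_eq]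

/-- `aP_θ + bP_τ` is positive semidefinite if and only if
`aP_θ + bP_τ = kI + mP_π` for some reals `k ≥ |m|` and some self-inverse permutation `π`. -/
theorem genMatrixFn_stmt11 (n : ℕ) (hn : 1 ≤ n) (a b : ℂ) (θ τ : Equiv.Perm (Fin n)) :
    (a • permMat θ + b • permMat τ).PosSemidef ↔
      ∃ (k m : ℝ) (π : Equiv.Perm (Fin n)), |m| ≤ k ∧ π = π⁻¹ ∧
        a • permMat θ + b • permMat τ =
          (k : ℂ) • (1 : Matrix (Fin n) (Fin n) ℂ) + (m : ℂ) • permMat π := by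
  simp only [permMat_eq_permMatrix_inv, genMatrixFn_stmt11_general,
    RCLike.ofReal_eq_complex_ofReal]
  refine exists₂_congr fun k m => exists_congr fun π => and_congr_right fun _ =>
    and_congr_right fun hπ => ?_
  rw [← hπ]
end
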